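/- arXiv:2009.12237 — 2 statements merged into one kernel-verified Lean document; each statement's English description precedes it below -/
import Mathlib

section
/- For every predicate ρ on fiber vectors (in particular, any arithmetic constraint on the unary-predicate cardinalities k(P_j) = ∑_i bin(i)_j·k_i), the number of models (f,g) on Fin n whose fiber vector k(f) satisfies ρ equals ∑_{k ⊨ ρ, Σk = n} C(n;k) · ∏_{0 ≤ i ≤ j < I} n_{ij}^{k(i,j)}. (This is the closed form for first-order model counting of a pure universal FO² formula with cardinality constraints on unary predicates.) -/
/-!
A model consists of a 1-type assignment `f` and, independently for each pair `a < b`, a pair-type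
allowed by `N (f a) (f b)`, so `f` extends to exactly `∏_{a < b} nty N (f a) (f b)` models
(`card_models`). Since `s` is a bijection between the pair-types allowed for `(i, j)` and those
allowed for `(j, i)`, `nty N` is symmetric, and every factor can be written with its two 1-types in
increasing order. Grouping the factors by this ordered pair `(i, j)` gives the exponents `kij k i j`,
where `k` is the fiber vector of `f` (`prod_nty_eq`): a pair inside one fiber is an unordered pair
from a `k i`-element set, and a pair with distinct 1-types `i < j` is a choice of one element from
each of the two fibers (`card_pairs`). Hence the number of extensions depends only on `k`, and it
remains to count the `f` with a given fiber vector. That this is the multinomial coefficient is read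
off from the monomial coefficients of `(∑ i, X i) ^ n`, expanded once as a sum over all `f` and once
by the multinomial theorem (`card_fiberVec_eq`).
-/


/-- The set of ordered pairs `a < b` of domain elements `Fin n`. -/
abbrev IdxPair (n : ℕ) := {p : Fin n × Fin n // p.1 < p.2}

/-- A model on the domain `Fin n`: a 1-type assignment `f : Fin n → Fin I` together with a
pair-type assignment `g` on the pairs `a < b`, compatible with `N`. -/
structure PairModel (n I : ℕ) (V : Type) (N : Fin I → Fin I → V → Bool) where
  f : Fin n → Fin I
  g : IdxPair n → V
  valid : ∀ p : IdxPair n, N (f p.1.1) (f p.1.2) (g p) = true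

/-- `n_{ij}`: the number of pair-types `v ∈ V` compatible with the 1-types `i, j`. -/
noncomputable def nty {I : ℕ} {V : Type} (N : Fin I → Fin I → V → Bool) (i j : Fin I) : ℕ :=
  Nat.card {v : V // N i j v = true}

/-- The fiber vector of `f : Fin n → Fin I`: `k_i = |f⁻¹(i)|`. -/
noncomputable def fiberVec {n I : ℕ} (f : Fin n → Fin I) : Fin I → ℕ :=
  fun i => Nat.card {a : Fin n // f a = i}

/-- `k(i,j) = k_i (k_i − 1)/2` if `i = j` and `k_i · k_j` otherwise. -/
def kij {I : ℕ} (k : Fin I → ℕ) (i j : Fin I) : ℕ :=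
  if i = j then k i * (k i - 1) / 2 else k i * k j

theorem fiberVec_apply {n I : ℕ} (f : Fin n → Fin I) (i : Fin I) :
    fiberVec f i = (Finset.univ.filter (fun a => f a = i)).card := by
  rw [fiberVec, Nat.card_eq_fintype_card, Fintype.card_subtype]

theorem fiberVec_mem {n I : ℕ} (f : Fin n → Fin I) :
    fiberVec f ∈ Finset.Nat.antidiagonalTuple I n := by
  rw [Finset.Nat.mem_antidiagonalTuple]
  simp_rw [fiberVec_apply]
  rw [← Finset.card_eq_sum_card_fiberwise (fun _ _ => Finset.mem_coe.2 (Finset.mem_univ _))]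
  simp

theorem prod_X_pow {I : ℕ} (k : Fin I → ℕ) :
    (∏ i, (MvPolynomial.X i : MvPolynomial (Fin I) ℕ) ^ k i) =
      MvPolynomial.monomial (Finsupp.equivFunOnFinite.symm k) 1 := by
  rw [MvPolynomial.monomial_eq, Finsupp.prod_fintype _ _ (fun i => pow_zero _)]
  simp

/-- Compare the coefficients of the monomial with exponent vector `k` in the two expansions of
`(∑ i, X i) ^ n`. -/
theorem card_fiberVec_eq {n I : ℕ} (k : Fin I → ℕ)
    (hk : k ∈ Finset.Nat.antidiagonalTuple I n) :
    (Finset.univ.filter (fun f : Fin n → Fin I => fiberVec f = k)).card =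
      Nat.multinomial Finset.univ k := by
  have h1 : (∑ i, (MvPolynomial.X i : MvPolynomial (Fin I) ℕ)) ^ n =
      ∑ f : Fin n → Fin I,
        MvPolynomial.monomial (Finsupp.equivFunOnFinite.symm (fiberVec f)) 1 := by
    rw [Fintype.sum_pow]
    refine Finset.sum_congr rfl fun f _ => ?_
    rw [← prod_X_pow, ← Finset.prod_fiberwise' Finset.univ f]
    refine Finset.prod_congr rfl fun i _ => ?_
    rw [Finset.prod_const, fiberVec_apply]
  have h2 := Finset.sum_pow_eq_sum_piAntidiag Finset.univ
    (fun i => (MvPolynomial.X i : MvPolynomial (Fin I) ℕ)) n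
  simp only [prod_X_pow, ← nsmul_eq_mul] at h2
  rw [h1] at h2
  have h3 := congrArg (MvPolynomial.coeff (Finsupp.equivFunOnFinite.symm k)) h2
  simp only [MvPolynomial.coeff_sum, MvPolynomial.coeff_smul,
    MvPolynomial.coeff_monomial, Finsupp.equivFunOnFinite.symm.injective.eq_iff] at h3
  have hk' : k ∈ Finset.piAntidiag Finset.univ n := by
    simpa [Finset.Nat.mem_antidiagonalTuple] using hk
  rw [Finset.card_filter, h3]
  simp only [smul_eq_mul, mul_ite, mul_one, mul_zero]
  rw [Finset.sum_ite_eq', if_pos hk']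

/-- The pair `(i, j)` arranged in increasing order. -/
def sortPair {I : ℕ} (i j : Fin I) : Fin I × Fin I := (min i j, max i j)

theorem card_pairs {n I : ℕ} (f : Fin n → Fin I) (i j : Fin I) (hij : i ≤ j) :
    (Finset.univ.filter (fun p : IdxPair n => sortPair (f p.1.1) (f p.1.2) = (i, j))).card =
      kij (fiberVec f) i j := by
  unfold kij
  split_ifs with h
  · subst h
    rw [fiberVec_apply, ← Nat.choose_two_right, ← Finset.card_powersetCard]
    -- `a < b` corresponds to the two-element subset `{a, b}` of the fiber
    refine Finset.card_bij (fun p _ => {p.1.1, p.1.2}) ?_ ?_ ?_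
    · rintro ⟨⟨a, b⟩, hab⟩ hp
      simp only [sortPair, Finset.mem_filter, Finset.mem_univ, true_and, Prod.mk.injEq] at hp
      have : f a = i ∧ f b = i := by grind
      rw [Finset.mem_powersetCard]
      refine ⟨?_, Finset.card_pair (ne_of_lt hab)⟩
      intro x hx
      simp only [Finset.mem_insert, Finset.mem_singleton] at hx
      rcases hx with rfl | rfl <;> simp [this]
    · rintro ⟨⟨a, b⟩, hab⟩ _ ⟨⟨c, d⟩, hcd⟩ _ h
      simp only at hab hcd h
      have h1 : a ∈ ({c, d} : Finset _) := h ▸ by simp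
      have h2 : b ∈ ({c, d} : Finset _) := h ▸ by simp
      have h3 : c ∈ ({a, b} : Finset _) := h ▸ by simp
      simp only [Finset.mem_insert, Finset.mem_singleton] at h1 h2 h3
      simp only [Subtype.mk.injEq, Prod.mk.injEq]
      grind
    · intro t ht
      rw [Finset.mem_powersetCard] at ht
      obtain ⟨ht, hc⟩ := ht
      obtain ⟨a, b, hab, rfl⟩ := Finset.card_eq_two.1 hc
      have ha : f a = i := (Finset.mem_filter.1 (ht (by simp))).2
      have hb : f b = i := (Finset.mem_filter.1 (ht (by simp))).2
      rcases lt_or_gt_of_ne hab with h | h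
      · exact ⟨⟨(a, b), h⟩, by simp [sortPair, ha, hb], rfl⟩
      · exact ⟨⟨(b, a), h⟩, by simp [sortPair, ha, hb], Finset.pair_comm _ _⟩
  · have hlt : i < j := lt_of_le_of_ne hij h
    rw [fiberVec_apply, fiberVec_apply, ← Finset.card_product]
    -- `a < b` corresponds to the same two elements, the one of 1-type `i` listed first
    refine Finset.card_bij
      (fun p _ => if f p.1.1 = i then (p.1.1, p.1.2) else (p.1.2, p.1.1)) ?_ ?_ ?_
    · rintro ⟨⟨a, b⟩, hab⟩ hp
      simp only [sortPair, Finset.mem_filter, Finset.mem_univ, true_and, Prod.mk.injEq] at hp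
      simp only [Finset.mem_product, Finset.mem_filter, Finset.mem_univ, true_and]
      grind
    · rintro ⟨⟨a, b⟩, hab⟩ _ ⟨⟨c, d⟩, hcd⟩ _ h
      simp only at hab hcd h
      simp only [Subtype.mk.injEq, Prod.mk.injEq]
      grind
    · rintro ⟨a, b⟩ hp
      simp only [Finset.mem_product, Finset.mem_filter, Finset.mem_univ, true_and] at hp
      obtain ⟨ha, hb⟩ := hp
      have hab : a ≠ b := by rintro rfl; exact h (ha.symm.trans hb)
      rcases lt_or_gt_of_ne hab with h' | h'
      · exact ⟨⟨(a, b), h'⟩, by simp [sortPair, ha, hb, hij], by simp [ha]⟩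
      · exact ⟨⟨(b, a), h'⟩, by simp [sortPair, ha, hb, hij], by simp [hb, Ne.symm h]⟩

theorem nty_symm {I : ℕ} {V : Type} (s : V → V) (hs : Function.Involutive s)
    (N : Fin I → Fin I → V → Bool) (hN : ∀ i j v, N i j v = N j i (s v)) (i j : Fin I) :
    nty N i j = nty N j i :=
  Nat.card_congr (hs.toPerm.subtypeEquiv fun v => by
    rw [hN i j v, Function.Involutive.coe_toPerm])

theorem prod_nty_eq {n I : ℕ} {V : Type} (s : V → V) (hs : Function.Involutive s)
    (N : Fin I → Fin I → V → Bool) (hN : ∀ i j v, N i j v = N j i (s v)) (f : Fin n → Fin I) :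
    ∏ p : IdxPair n, nty N (f p.1.1) (f p.1.2) =
      ∏ q ∈ Finset.univ.filter (fun q : Fin I × Fin I => q.1 ≤ q.2),
        nty N q.1 q.2 ^ kij (fiberVec f) q.1 q.2 := by
  have hsort : ∀ i j : Fin I, nty N i j = nty N (sortPair i j).1 (sortPair i j).2 := by
    intro i j
    rcases le_total i j with h | h
    · simp [sortPair, h]
    · simpa [sortPair, h] using nty_symm s hs N hN i j
  simp_rw [hsort (f _) (f _)]
  rw [← Finset.prod_fiberwise_of_maps_to' (t := Finset.univ.filter
      (fun q : Fin I × Fin I => q.1 ≤ q.2))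
    (g := fun p : IdxPair n => sortPair (f p.1.1) (f p.1.2))
    (fun p _ => by simp [sortPair]) (fun q => nty N q.1 q.2)]
  refine Finset.prod_congr rfl fun q hq => ?_
  rw [Finset.prod_const, ← card_pairs f q.1 q.2 (Finset.mem_filter.1 hq).2]

/-- A model satisfying `ρ` is a 1-type assignment satisfying `ρ` together with a compatible
pair-type for each pair. -/
def modelEquiv {n I : ℕ} {V : Type} (N : Fin I → Fin I → V → Bool) (ρ : (Fin I → ℕ) → Prop) :
    {ω : PairModel n I V N // ρ (fiberVec ω.f)} ≃
      Σ f : {f : Fin n → Fin I // ρ (fiberVec f)},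
        ∀ p : IdxPair n, {v : V // N (f.1 p.1.1) (f.1 p.1.2) v = true} where
  toFun ω := ⟨⟨ω.1.f, ω.2⟩, fun p => ⟨ω.1.g p, ω.1.valid p⟩⟩
  invFun x := ⟨⟨x.1.1, fun p => (x.2 p).1, fun p => (x.2 p).2⟩, x.1.2⟩
  left_inv _ := rfl
  right_inv _ := rfl

theorem card_models {n I : ℕ} {V : Type} [Finite V] (N : Fin I → Fin I → V → Bool)
    (ρ : (Fin I → ℕ) → Prop) [DecidablePred ρ] :
    Nat.card {ω : PairModel n I V N // ρ (fiberVec ω.f)} =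
      ∑ f ∈ Finset.univ.filter (fun f : Fin n → Fin I => ρ (fiberVec f)),
        ∏ p : IdxPair n, nty N (f p.1.1) (f p.1.2) := by
  rw [Nat.card_congr (modelEquiv N ρ), Nat.card_sigma]
  simp_rw [Nat.card_pi]
  exact (Finset.sum_subtype (Finset.univ.filter (fun f : Fin n → Fin I => ρ (fiberVec f)))
    (by simp) (fun f => ∏ p : IdxPair n, nty N (f p.1.1) (f p.1.2))).symm

/-- For every predicate `ρ` on fiber vectors (in particular, any arithmetic
constraint on the unary-predicate cardinalities `k(P_j) = ∑_i bin(i)_j · k_i`), the number of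
models `(f,g)` on `Fin n` whose fiber vector satisfies `ρ` equals
`∑_{k ⊨ ρ, Σk = n} C(n;k) · ∏_{0 ≤ i ≤ j < I} n_{ij}^{k(i,j)}` — the closed form for FOMC of a
pure universal FO² formula with cardinality constraints on unary predicates. -/
theorem stmt6 (n I : ℕ) (V : Type) [Fintype V] [DecidableEq V]
    (s : V → V) (hs : Function.Involutive s)
    (N : Fin I → Fin I → V → Bool) (hN : ∀ i j v, N i j v = N j i (s v))
    (ρ : (Fin I → ℕ) → Prop) [DecidablePred ρ] :
    Nat.card {ω : PairModel n I V N // ρ (fiberVec ω.f)} =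
      ∑ k ∈ (Finset.Nat.antidiagonalTuple I n).filter ρ,
        Nat.multinomial Finset.univ k *
          ∏ p ∈ Finset.univ.filter (fun p : Fin I × Fin I => p.1 ≤ p.2),
            nty N p.1 p.2 ^ kij k p.1 p.2 := by
  rw [card_models, ← Finset.sum_fiberwise_of_maps_to
    (t := (Finset.Nat.antidiagonalTuple I n).filter ρ) (g := fiberVec)
    (fun f hf => Finset.mem_filter.2 ⟨fiberVec_mem f, (Finset.mem_filter.1 hf).2⟩)]
  refine Finset.sum_congr rfl fun k hk => ?_
  obtain ⟨hk, hρ⟩ := Finset.mem_filter.1 hk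
  rw [← card_fiberVec_eq k hk, ← smul_eq_mul, ← Finset.sum_const, Finset.filter_filter]
  refine Finset.sum_congr ?_ fun f hf => ?_
  · ext f
    simp only [Finset.mem_filter, Finset.mem_univ, true_and]
    exact ⟨fun h => h.2, fun h => ⟨h ▸ hρ, h⟩⟩
  · rw [prod_nty_eq s hs N hN, (Finset.mem_filter.1 hf).2]
end

section
/- Let ω1 : Fin I → ℝ and ω2 : V → ℝ with ω2 ∘ s = ω2, and define the weight of a model (f,g) as w(f,g) = (∏_{a ∈ Fin n} ω1(f a)) · (∏_{a<b} ω2(g(a,b))). Then ∑_{(f,g) model} w(f,g) = ∑_{(k,h)} (∏_{i} ω1(i)^{k_i}) · (∏_{0≤i≤j<I} ∏_{v∈V} ω2(v)^{h^{ij}_v}) · F(k,h), where the sum ranges over all statistics (k,h) with Σk = n and Σ_v h^{ij}_v = k(i,j), and F(k,h) is the number of models with fiber vector k and pair statistics h. (This expresses symmetric-weight WFOMC of an FO² formula through a weight function on (k,h) vectors: for symmetric per-predicate weights w(P,0), w(P,1), one takes ω1(i) = ∏_j w(P_j,1)^{bin(i)_j} w(P_j,0)^{1−bin(i)_j} and the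 analogous product over binary atoms for ω2(v), yielding w(k,h) = ∏_P w(P,1)^{(k,h)(P)} w(P,0)^{(k,h)(¬P)}.) -/
/-- Unordered pairs of 1-types, represented by ordered pairs `i ≤ j`. -/
abbrev TPair (I : ℕ) := {p : Fin I × Fin I // p.1 ≤ p.2}

/-- The normalized pair-type of a pair `a < b` in a model: `g(a,b)` if `f a ≤ f b`,
and `s (g(a,b))` otherwise. -/
def normType {n I : ℕ} {V : Type} {N : Fin I → Fin I → V → Bool}
    (s : V → V) (ω : PairModel n I V N) (q : IdxPair n) : V :=
  if ω.f q.1.1 ≤ ω.f q.1.2 then ω.g q else s (ω.g q)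

/-- `h^{ij}_v(ω)`: the number of pairs `a < b` whose 1-types are `{f a, f b} = {i, j}` and
whose normalized pair-type is `v`. -/
noncomputable def hstat {n I : ℕ} {V : Type} {N : Fin I → Fin I → V → Bool}
    (s : V → V) (ω : PairModel n I V N) (p : TPair I) (v : V) : ℕ :=
  Nat.card {q : IdxPair n //
    ((ω.f q.1.1 = p.1.1 ∧ ω.f q.1.2 = p.1.2) ∨ (ω.f q.1.1 = p.1.2 ∧ ω.f q.1.2 = p.1.1)) ∧
    normType s ω q = v}

/-- An element `a` of a model `(f,g)` has a Ψ-witness if `W0 (f a) = true` (i.e. `Ψ(a,a)`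
holds), or there is `b` with `a < b` and `W (f a) (f b) (g(a,b)) = true`, or there is `b < a`
and `W (f a) (f b) (s (g(b,a))) = true`; otherwise `a` is blocked. -/
def hasWitness {n I : ℕ} {V : Type} {N : Fin I → Fin I → V → Bool}
    (s : V → V) (W : Fin I → Fin I → V → Bool) (W0 : Fin I → Bool)
    (ω : PairModel n I V N) (a : Fin n) : Prop :=
  W0 (ω.f a) = true ∨
    (∃ b : Fin n, ∃ hab : a < b, W (ω.f a) (ω.f b) (ω.g ⟨(a, b), hab⟩) = true) ∨
    (∃ b : Fin n, ∃ hba : b < a, W (ω.f a) (ω.f b) (s (ω.g ⟨(b, a), hba⟩)) = true)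

/-! ### Statistics of a model -/

instance {n I : ℕ} {V : Type} [Finite V] {N : Fin I → Fin I → V → Bool} :
    Finite (PairModel n I V N) :=
  Finite.of_injective (fun ω => (ω.f, ω.g)) (by
    rintro ⟨f, g, _⟩ ⟨f', g', _⟩ h
    simpa using h)

/-- The unordered pair of 1-types of a pair `a < b`, as a sorted pair. -/
def typePair {n I : ℕ} (f : Fin n → Fin I) (q : IdxPair n) : TPair I :=
  ⟨(min (f q.1.1) (f q.1.2), max (f q.1.1) (f q.1.2)), min_le_max⟩

theorem typePair_eq_iff {n I : ℕ} (f : Fin n → Fin I) (q : IdxPair n) (p : TPair I) :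
    typePair f q = p ↔
      ((f q.1.1 = p.1.1 ∧ f q.1.2 = p.1.2) ∨ (f q.1.1 = p.1.2 ∧ f q.1.2 = p.1.1)) := by
  obtain ⟨⟨i, j⟩, hij⟩ := p
  simp only [typePair, Subtype.mk.injEq, Prod.mk.injEq]
  simp only at hij
  rcases le_total (f q.1.1) (f q.1.2) with h | h <;> simp only [h, min_eq_left, min_eq_right,
    max_eq_left, max_eq_right] <;> constructor <;> intro h' <;> grind

theorem fiberVec_eq {n I : ℕ} (f : Fin n → Fin I) (i : Fin I) :
    fiberVec f i = (Finset.univ.filter fun a => f a = i).card := by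
  rw [fiberVec, Nat.card_eq_fintype_card, Fintype.card_subtype]

theorem hstat_eq {n I : ℕ} {V : Type} [DecidableEq V] {N : Fin I → Fin I → V → Bool}
    (s : V → V) (ω : PairModel n I V N) (p : TPair I) (v : V) :
    hstat s ω p v = (Finset.univ.filter fun q : IdxPair n =>
      typePair ω.f q = p ∧ normType s ω q = v).card := by
  simp only [hstat, ← typePair_eq_iff]
  rw [Nat.card_eq_fintype_card, Fintype.card_subtype]

theorem sum_fiberVec {n I : ℕ} (f : Fin n → Fin I) : ∑ i, fiberVec f i = n := by
  simp only [fiberVec_eq]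
  rw [← Finset.card_eq_sum_card_fiberwise (fun _ _ => Finset.mem_coe.2 (Finset.mem_univ _))]
  simp

/-! ### Counting pairs by their 1-types -/

/-- The number of pairs `a < b` with `f a = i` and `f b = j`. -/
def ordCount {n I : ℕ} (f : Fin n → Fin I) (i j : Fin I) : ℕ :=
  (Finset.univ.filter fun q : Fin n × Fin n => q.1 < q.2 ∧ f q.1 = i ∧ f q.2 = j).card

theorem ordCount_swap {n I : ℕ} (f : Fin n → Fin I) (i j : Fin I) :
    ordCount f j i =
      (Finset.univ.filter fun q : Fin n × Fin n => q.2 < q.1 ∧ f q.1 = i ∧ f q.2 = j).card := by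
  refine Finset.card_equiv (Equiv.prodComm _ _) fun q => ?_
  simp only [Finset.mem_filter, Finset.mem_univ, true_and, Equiv.prodComm_apply, Prod.fst_swap,
    Prod.snd_swap]
  tauto

theorem ordCount_add {n I : ℕ} (f : Fin n → Fin I) (i j : Fin I) :
    ordCount f i j + ordCount f j i =
      (Finset.univ.filter fun q : Fin n × Fin n => q.1 ≠ q.2 ∧ f q.1 = i ∧ f q.2 = j).card := by
  rw [ordCount_swap f i j, ordCount, ← Finset.card_union_of_disjoint]
  · congr 1
    ext q
    simp only [Finset.mem_union, Finset.mem_filter, Finset.mem_univ, true_and, ne_iff_lt_or_gt]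
    tauto
  · rw [Finset.disjoint_left]
    intro q h1 h2
    simp only [Finset.mem_filter] at h1 h2
    exact lt_asymm h1.2.1 h2.2.1

theorem ordCount_add_of_ne {n I : ℕ} (f : Fin n → Fin I) {i j : Fin I} (hij : i ≠ j) :
    ordCount f i j + ordCount f j i = fiberVec f i * fiberVec f j := by
  rw [ordCount_add, fiberVec_eq, fiberVec_eq, ← Finset.card_product]
  congr 1
  ext q
  simp only [Finset.mem_product, Finset.mem_filter, Finset.mem_univ, true_and]
  grind

theorem ordCount_self {n I : ℕ} (f : Fin n → Fin I) (i : Fin I) :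
    ordCount f i i = fiberVec f i * (fiberVec f i - 1) / 2 := by
  have h : ordCount f i i + ordCount f i i = fiberVec f i * (fiberVec f i - 1) := by
    rw [ordCount_add, fiberVec_eq, Nat.mul_sub_one, ← Finset.offDiag_card]
    congr 1
    ext q
    simp only [Finset.mem_offDiag, Finset.mem_filter, Finset.mem_univ, true_and]
    tauto
  omega

theorem card_typePair {n I : ℕ} (f : Fin n → Fin I) (p : TPair I) :
    (Finset.univ.filter fun q : IdxPair n => typePair f q = p).card =
      kij (fiberVec f) p.1.1 p.1.2 := by
  have h1 : (Finset.univ.filter fun q : IdxPair n => typePair f q = p).card =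
      (Finset.univ.filter fun q : Fin n × Fin n => q.1 < q.2 ∧
        ((f q.1 = p.1.1 ∧ f q.2 = p.1.2) ∨ (f q.1 = p.1.2 ∧ f q.2 = p.1.1))).card := by
    rw [← Finset.card_map (Function.Embedding.subtype _)]
    congr 1
    ext q
    simp [typePair_eq_iff]
    tauto
  rw [h1, kij]
  split_ifs with hp
  · rw [← ordCount_self, ordCount]
    simp [hp]
  · rw [← ordCount_add_of_ne f hp, ordCount, ordCount, ← Finset.card_union_of_disjoint]
    · congr 1
      ext q
      simp only [Finset.mem_union, Finset.mem_filter, Finset.mem_univ, true_and]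
      tauto
    · rw [Finset.disjoint_left]
      intro q h1 h2
      simp only [Finset.mem_filter] at h1 h2
      exact hp (h1.2.2.1.symm.trans h2.2.2.1)

/-- The pair statistics of every model satisfy `Σ_v h^{ij}_v = k(i,j)`. -/
theorem sum_hstat {n I : ℕ} {V : Type} [Fintype V] [DecidableEq V]
    {N : Fin I → Fin I → V → Bool} (s : V → V) (ω : PairModel n I V N) (p : TPair I) :
    ∑ v, hstat s ω p v = kij (fiberVec ω.f) p.1.1 p.1.2 := by
  simp only [hstat_eq, ← Finset.filter_filter]
  rw [← Finset.card_eq_sum_card_fiberwise (fun _ _ => Finset.mem_coe.2 (Finset.mem_univ _)),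
    card_typePair]

/-! ### Weights and the sum over statistics -/

/-- The weight of a model is a function of its statistics. -/
theorem weight_eq {n I : ℕ} {V : Type} [Fintype V] [DecidableEq V]
    {N : Fin I → Fin I → V → Bool} (s : V → V) (ω1 : Fin I → ℝ) (ω2 : V → ℝ)
    (hω2 : ω2 ∘ s = ω2) (ω : PairModel n I V N) :
    (∏ a : Fin n, ω1 (ω.f a)) * ∏ q : IdxPair n, ω2 (ω.g q) =
      (∏ i : Fin I, ω1 i ^ fiberVec ω.f i) *
        ∏ p : TPair I, ∏ v : V, ω2 v ^ hstat s ω p v := by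
  have hnorm : ∀ q, ω2 (ω.g q) = ω2 (normType s ω q) := by
    intro q
    unfold normType
    split_ifs
    · rfl
    · exact (congrFun hω2 (ω.g q)).symm
  congr 1
  · simp only [fiberVec_eq]
    rw [← Finset.prod_fiberwise Finset.univ ω.f]
    refine Finset.prod_congr rfl fun i _ => Finset.prod_eq_pow_card fun a ha => ?_
    rw [(Finset.mem_filter.1 ha).2]
  · simp only [hnorm, hstat_eq]
    rw [← Finset.prod_fiberwise Finset.univ (typePair ω.f)]
    refine Finset.prod_congr rfl fun p _ => ?_
    rw [← Finset.prod_fiberwise _ (normType s ω)]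
    refine Finset.prod_congr rfl fun v _ => ?_
    rw [Finset.filter_filter]
    refine Finset.prod_eq_pow_card fun q hq => ?_
    rw [(Finset.mem_filter.1 hq).2.2]

/-- Collecting the terms of a finite sum by the values of two functions `k` and `h`, when the
summand depends on these values only and `P` holds at all values that occur. -/
theorem finsum_eq_finsum_card {M A B : Type*} [Finite M] (k : M → A) (h : M → B)
    (P : A → B → Prop) (hP : ∀ m, P (k m) (h m)) (w : A → B → ℝ) :
    ∑ᶠ m, w (k m) (h m) =
      ∑ᶠ (a : A) (b : B) (_ : P a b), w a b * (Nat.card {m : M // k m = a ∧ h m = b} : ℝ) := by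
  classical
  have := Fintype.ofFinite M
  have key : ∀ a b, (∑ᶠ (_ : P a b), w a b * (Nat.card {m : M // k m = a ∧ h m = b} : ℝ)) =
      ∑ m, if k m = a ∧ h m = b then w (k m) (h m) else 0 := by
    intro a b
    have hc : w a b * (Nat.card {m : M // k m = a ∧ h m = b} : ℝ) =
        ∑ m, if k m = a ∧ h m = b then w (k m) (h m) else 0 := by
      rw [← Finset.sum_filter, Nat.card_eq_fintype_card, Fintype.card_subtype, mul_comm,
        ← nsmul_eq_mul, ← Finset.sum_const]
      refine Finset.sum_congr rfl fun m hm => ?_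
      rw [(Finset.mem_filter.1 hm).2.1, (Finset.mem_filter.1 hm).2.2]
    by_cases hab : P a b
    · rw [finsum_eq_if, if_pos hab, hc]
    · rw [finsum_eq_if, if_neg hab]
      refine (Finset.sum_eq_zero fun m _ => if_neg ?_).symm
      rintro ⟨rfl, rfl⟩
      exact hab (hP m)
  simp only [key]
  have inner : ∀ a, (∑ᶠ b, ∑ m, if k m = a ∧ h m = b then w (k m) (h m) else 0) =
      ∑ m, if k m = a then w (k m) (h m) else 0 := by
    intro a
    rw [finsum_eq_sum_of_support_subset (s := Finset.univ.image h), Finset.sum_comm]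
    · refine Finset.sum_congr rfl fun m _ => ?_
      by_cases hm : k m = a <;> simp [hm]
    · intro b hb
      obtain ⟨m, -, hm⟩ := Finset.exists_ne_zero_of_sum_ne_zero hb
      simp only [ne_eq, ite_eq_right_iff, not_forall] at hm
      simpa using ⟨m, hm.1.2⟩
  simp only [inner]
  rw [finsum_eq_sum_of_support_subset (s := Finset.univ.image k), Finset.sum_comm,
    finsum_eq_sum_of_fintype]
  · refine Finset.sum_congr rfl fun m _ => ?_
    simp
  · intro a ha
    obtain ⟨m, -, hm⟩ := Finset.exists_ne_zero_of_sum_ne_zero ha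
    simp only [ne_eq, ite_eq_right_iff, not_forall] at hm
    simpa using ⟨m, hm.1⟩

/-- Let `ω1 : Fin I → ℝ` and `ω2 : V → ℝ` with `ω2 ∘ s = ω2`, and define
the weight of a model `(f,g)` as `w(f,g) = (∏_{a} ω1 (f a)) · (∏_{a<b} ω2 (g(a,b)))`.  Then
`∑_{(f,g) model} w(f,g) = ∑_{(k,h)} (∏_i ω1(i)^{k_i}) (∏_{i≤j} ∏_v ω2(v)^{h^{ij}_v}) F(k,h)`,
where the sum ranges over all statistics `(k,h)` with `Σk = n` and `Σ_v h^{ij}_v = k(i,j)`,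
and `F(k,h)` is the number of models with fiber vector `k` and pair statistics `h`.  This
expresses symmetric-weight WFOMC of an FO² formula through a weight function on `(k,h)`
vectors. -/
theorem stmt13 (n I : ℕ) (V : Type) [Fintype V] [DecidableEq V]
    (s : V → V) (hs : Function.Involutive s)
    (N : Fin I → Fin I → V → Bool) (hN : ∀ i j v, N i j v = N j i (s v))
    (ω1 : Fin I → ℝ) (ω2 : V → ℝ) (hω2 : ω2 ∘ s = ω2) :
    (∑ᶠ ω : PairModel n I V N,
        (∏ a : Fin n, ω1 (ω.f a)) * ∏ q : IdxPair n, ω2 (ω.g q)) =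
      ∑ᶠ (k : Fin I → ℕ) (h : TPair I → V → ℕ)
        (_ : (∑ i, k i) = n ∧ ∀ p : TPair I, (∑ v, h p v) = kij k p.1.1 p.1.2),
        (∏ i : Fin I, ω1 i ^ k i) * (∏ p : TPair I, ∏ v : V, ω2 v ^ h p v) *
          (Nat.card {ω : PairModel n I V N //
            fiberVec ω.f = k ∧ hstat s ω = h} : ℝ) := by
  simp only [weight_eq s ω1 ω2 hω2]
  exact finsum_eq_finsum_card (fun ω : PairModel n I V N => fiberVec ω.f) (hstat s)
    (fun k h => (∑ i, k i) = n ∧ ∀ p : TPair I, (∑ v, h p v) = kij k p.1.1 p.1.2)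
    (fun ω => ⟨sum_fiberVec ω.f, sum_hstat s ω⟩)
    (fun k h => (∏ i : Fin I, ω1 i ^ k i) * ∏ p : TPair I, ∏ v : V, ω2 v ^ h p v)
end
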